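/- arXiv:math-ph/0104021 — 5 statements merged into one kernel-verified Lean document; each statement's English description precedes it below -/
import Mathlib

section
/- Let V be a finite-dimensional real vector space with a nondegenerate alternating bilinear form ω, and let D, G ⊆ V be subspaces such that dim G + dim D = dim V and D^⊥ ∩ G^⊥ = {0}. Then for every vector v₀ ∈ V there exists a unique g ∈ G such that v₀ + g ∈ D. -/
/-!
Only the zero vector pairs to zero with all of `G ⊔ D`, so `v ↦ ω v` embeds `V` into the dual of
`G ⊔ D`. Comparing dimensions, `G` and `D` span `V`, and since their dimensions add up to that of
`V` they are complementary; `g` is then the component of `-v₀` in `G`.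
-/

/-- The symplectic orthogonal of a subspace `U` with respect to a bilinear form `ω`:
`U^⊥ = {v ∈ V : ω(v,u) = 0 for all u ∈ U}`. -/
def sympOrth {V : Type} [AddCommGroup V] [Module ℝ V]
    (ω : V →ₗ[ℝ] V →ₗ[ℝ] ℝ) (U : Submodule ℝ V) : Submodule ℝ V where
  carrier := {v | ∀ u ∈ U, ω v u = 0}
  zero_mem' := by intro u hu; simp
  add_mem' := by intro a b ha hb u hu; simp [ha u hu, hb u hu]
  smul_mem' := by intro c a ha u hu; simp [ha u hu]

theorem existsUnique_mem_and_add_mem_of_isCompl {R M : Type*} [Ring R] [AddCommGroup M]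
    [Module R M] {p q : Submodule R M} (h : IsCompl p q) (x : M) :
    ∃! y : M, y ∈ p ∧ x + y ∈ q := by
  obtain ⟨y, z, hyz, -⟩ := Submodule.existsUnique_add_of_isCompl h (-x)
  have hz : x + y = -z := by rw [← neg_neg x, ← hyz]; abel
  have hy : x + y ∈ q := hz ▸ q.neg_mem z.2
  refine ⟨y, ⟨y.2, hy⟩, fun y' ⟨hy'p, hy'q⟩ ↦ sub_eq_zero.mp ?_⟩
  have hsub : y' - y ∈ q := by simpa only [add_sub_add_left_eq_sub] using q.sub_mem hy'q hy
  exact Submodule.disjoint_def.mp h.disjoint _ (p.sub_mem hy'p y.2) hsub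

theorem isCompl_of_codisjoint_of_finrank_add_le {K V : Type*} [DivisionRing K] [AddCommGroup V]
    [Module K V] [FiniteDimensional K V] {s t : Submodule K V} (h : Codisjoint s t)
    (hdim : Module.finrank K s + Module.finrank K t ≤ Module.finrank K V) : IsCompl s t := by
  refine ⟨disjoint_iff.mpr (Submodule.finrank_eq_zero.mp ?_), h⟩
  have hsum := Submodule.finrank_sup_add_finrank_inf_eq s t
  rw [h.eq_top, finrank_top] at hsum
  lia

theorem orthogonalBilin_sup {R R₁ R₂ M M₁ M₂ : Type*} [CommSemiring R] [CommSemiring R₁]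
    [CommSemiring R₂] [AddCommMonoid M] [Module R M] [AddCommMonoid M₁] [Module R₁ M₁]
    [AddCommMonoid M₂] [Module R₂ M₂] {I₁ : R₁ →+* R} {I₂ : R₂ →+* R}
    (B : M₁ →ₛₗ[I₁] M₂ →ₛₗ[I₂] M) (s t : Submodule R₁ M₁) :
    (s ⊔ t).orthogonalBilin B = s.orthogonalBilin B ⊓ t.orthogonalBilin B := by
  ext y
  exact sup_le_iff (c := (B.flip y).ker)

theorem finrank_le_of_orthogonalBilin_eq_bot {R M N : Type*} [CommRing R] [Nontrivial R]
    [AddCommGroup M] [Module R M] [AddCommGroup N] [Module R N] {B : M →ₗ[R] N →ₗ[R] R}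
    {s : Submodule R M} [Module.Free R s] [Module.Finite R s] (h : s.orthogonalBilin B = ⊥) :
    Module.finrank R N ≤ Module.finrank R s := by
  have hinj : Function.Injective (B.domRestrict s).flip := by
    refine (injective_iff_map_eq_zero _).mpr fun y hy ↦ (Submodule.mem_bot R).mp (h ▸ ?_)
    exact fun x hx ↦ LinearMap.congr_fun hy ⟨x, hx⟩
  calc
    Module.finrank R N ≤ Module.finrank R (Module.Dual R s) :=
      LinearMap.finrank_le_finrank_of_injective hinj
    _ = Module.finrank R s := Module.finrank_linearMap_self R R s

theorem compatible_nonholonomic_unique_solution_general {K V : Type*} [Field K] [AddCommGroup V]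
    [Module K V] [FiniteDimensional K V] (B : V →ₗ[K] V →ₗ[K] K) (D G : Submodule K V)
    (hdim : Module.finrank K G + Module.finrank K D ≤ Module.finrank K V)
    (hint : D.orthogonalBilin B ⊓ G.orthogonalBilin B = ⊥) (v₀ : V) :
    ∃! g : V, g ∈ G ∧ v₀ + g ∈ D := by
  have horth : (G ⊔ D).orthogonalBilin B = ⊥ := by rw [orthogonalBilin_sup, inf_comm, hint]
  have hspan : G ⊔ D = ⊤ :=
    Submodule.eq_top_of_finrank_eq
      ((Submodule.finrank_le _).antisymm (finrank_le_of_orthogonalBilin_eq_bot horth))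
  have hcompl : IsCompl G D :=
    isCompl_of_codisjoint_of_finrank_add_le (codisjoint_iff.mpr hspan) hdim
  exact existsUnique_mem_and_add_mem_of_isCompl hcompl v₀

/-- For a nondegenerate alternating bilinear form `ω` on a finite-dimensional real vector
space `V` and subspaces `D, G ⊆ V` with `dim G + dim D = dim V` and `D^⊥ ∩ G^⊥ = 0`, for
every `v₀ ∈ V` there is a unique `g ∈ G` with `v₀ + g ∈ D`. -/
theorem compatible_nonholonomic_unique_solution
    {V : Type} [AddCommGroup V] [Module ℝ V] [FiniteDimensional ℝ V]
    (ω : V →ₗ[ℝ] V →ₗ[ℝ] ℝ)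
    (hω_nd : ∀ v : V, (∀ u : V, ω v u = 0) → v = 0)
    (hω_alt : ∀ v : V, ω v v = 0)
    (D G : Submodule ℝ V)
    (hdim : Module.finrank ℝ G + Module.finrank ℝ D = Module.finrank ℝ V)
    (hint : sympOrth ω D ⊓ sympOrth ω G = ⊥) :
    ∀ v₀ : V, ∃! g : V, g ∈ G ∧ v₀ + g ∈ D := by
  -- `orthogonalBilin` puts the subspace in the first slot of the form, `sympOrth` in the second.
  exact compatible_nonholonomic_unique_solution_general ω.flip D G hdim.le hint
end

section
/- Let V be a finite-dimensional real vector space with a nondegenerate alternating bilinear form ω, and let S : V → V be a linear endomorphism with ω(S u, v) = −ω(u, S v) for all u, v ∈ V, and such that ω(S v, v) > 0 for every v ∈ V with S v ≠ 0. Then for any subspace A ⊆ V with A ∩ ker S = {0} one has A ∩ (S(A))^⊥ = {0}. -/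
theorem sympOrth_eq_orthogonalBilin {V : Type} [AddCommGroup V] [Module ℝ V]
    {ω : V →ₗ[ℝ] V →ₗ[ℝ] ℝ} (hω : ω.IsRefl) (U : Submodule ℝ V) :
    sympOrth ω U = U.orthogonalBilin ω :=
  Submodule.ext fun _ ↦ forall₂_congr fun _ _ ↦ hω.eq_iff

section Sesquilinear

variable {R R₁ R₂ M M₁ M₂ : Type*} [CommSemiring R] [CommSemiring R₁] [CommSemiring R₂]
  [AddCommMonoid M] [Module R M] [AddCommMonoid M₁] [Module R₁ M₁]
  [AddCommMonoid M₂] [Module R₂ M₂]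
  {I₁ : R₁ →+* R} {I₂ : R₂ →+* R} {σ : R₂ →+* R₁} [RingHomSurjective σ]
  {B : M₁ →ₛₗ[I₁] M₂ →ₛₗ[I₂] M} {S : M₂ →ₛₗ[σ] M₁} {A : Submodule R₂ M₂}

theorem inf_orthogonalBilin_map_le_ker (hB : ∀ v ∈ A, S v ≠ 0 → B (S v) v ≠ 0) :
    A ⊓ (A.map S).orthogonalBilin B ≤ LinearMap.ker S := by
  rintro v ⟨hvA, hv_orth⟩
  have hv_self : B (S v) v = 0 := hv_orth (S v) (Submodule.mem_map_of_mem hvA)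
  exact LinearMap.mem_ker.2 (not_imp_not.1 (hB v hvA) hv_self)

theorem definite_admissible_implies_compatibility_general
    (hB : ∀ v ∈ A, S v ≠ 0 → B (S v) v ≠ 0) (hA : A ⊓ LinearMap.ker S = ⊥) :
    A ⊓ (A.map S).orthogonalBilin B = ⊥ :=
  eq_bot_iff.2 <| hA ▸ le_inf inf_le_left (inf_orthogonalBilin_map_le_ker hB)

end Sesquilinear

/-- A definite Lagrangian with admissible constraints satisfies the compatibility
condition: if `A ∩ ker S = 0` then `A ∩ (S(A))^⊥ = 0`. -/
theorem definite_admissible_implies_compatibility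
    {V : Type} [AddCommGroup V] [Module ℝ V] [FiniteDimensional ℝ V]
    (ω : V →ₗ[ℝ] V →ₗ[ℝ] ℝ)
    (hω_nd : ∀ v : V, (∀ u : V, ω v u = 0) → v = 0)
    (hω_alt : ∀ v : V, ω v v = 0)
    (S : V →ₗ[ℝ] V)
    (hS : ∀ u v : V, ω (S u) v = - ω u (S v))
    (hpos : ∀ v : V, S v ≠ 0 → 0 < ω (S v) v)
    (A : Submodule ℝ V)
    (hA : A ⊓ LinearMap.ker S = ⊥) :
    A ⊓ sympOrth ω (Submodule.map S A) = ⊥ := by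
  rw [sympOrth_eq_orthogonalBilin (LinearMap.IsAlt.isRefl hω_alt)]
  exact definite_admissible_implies_compatibility_general (fun v _ hSv ↦ (hpos v hSv).ne') hA
end

section
/- Let V be a finite-dimensional real vector space with a nondegenerate alternating bilinear form ω, and let S : V → V be a linear endomorphism with ω(S u, v) = −ω(u, S v) for all u, v ∈ V. Let U ⊆ V be a subspace such that U^⊥ ∩ ker S = {0} and S(U^⊥) ∩ U = {0}. Then V = U ⊕ S(U^⊥), and consequently for every v₀ ∈ V there exists a unique g ∈ S(U^⊥) such that v₀ + g ∈ U. -/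
/-!
The forms `ω(·, u)` with `u ∈ U` cut out `U^⊥`, so its codimension is at most `dim U`.
As `S` is injective on `U^⊥`, `dim U + dim S(U^⊥) ≥ dim V`, and two disjoint subspaces
whose dimensions add up to at least `dim V` are complementary. The force `g` is then minus the
component of `v₀` in `S(U^⊥)`.
-/

theorem finrank_map_eq_of_disjoint_ker {R M N : Type*} [Ring R] [AddCommGroup M] [Module R M]
    [AddCommGroup N] [Module R N] {f : M →ₗ[R] N} {p : Submodule R M}
    (h : Disjoint p (LinearMap.ker f)) :
    Module.finrank R (p.map f) = Module.finrank R p := by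
  rw [← LinearMap.range_domRestrict]
  exact LinearMap.finrank_range_of_inj (LinearMap.injective_domRestrict_iff.2 h)

theorem existsUnique_mem_add_mem_of_isCompl {R M : Type*} [Ring R] [AddCommGroup M] [Module R M]
    {p q : Submodule R M} (h : IsCompl p q) (x : M) : ∃! y, y ∈ q ∧ x + y ∈ p := by
  obtain ⟨a, b, rfl, -⟩ := Submodule.existsUnique_add_of_isCompl h x
  refine ⟨-b, ⟨neg_mem b.2, by simp⟩, fun y ⟨hyq, hyp⟩ ↦ eq_neg_of_add_eq_zero_right ?_⟩
  have hbyp : (b : M) + y ∈ p := by rwa [add_assoc, p.add_mem_iff_right a.2] at hyp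
  exact Submodule.disjoint_def.1 h.disjoint _ hbyp (q.add_mem b.2 hyq)

section BilinForm

variable {K V : Type*} [Field K] [AddCommGroup V] [Module K V] [FiniteDimensional K V]
  {B : LinearMap.BilinForm K V} {S : V →ₗ[K] V} {U : Submodule K V}

theorem isCompl_map_orthogonal (hker : Disjoint (B.orthogonal U) (LinearMap.ker S))
    (hdisj : Disjoint U ((B.orthogonal U).map S)) : IsCompl U ((B.orthogonal U).map S) := by
  refine (Submodule.isCompl_iff_disjoint _ _ ?_).2 hdisj
  calc
    Module.finrank K V ≤ Module.finrank K U + Module.finrank K (B.orthogonal U) :=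
      le_self_add.trans_eq (LinearMap.BilinForm.finrank_add_finrank_orthogonal' U).symm
    _ = Module.finrank K U + Module.finrank K ((B.orthogonal U).map S) := by
      rw [finrank_map_eq_of_disjoint_ker hker]

theorem regular_nonholonomic_unique_solution_general
    (hker : Disjoint (B.orthogonal U) (LinearMap.ker S))
    (hdisj : Disjoint U ((B.orthogonal U).map S)) :
    IsCompl U ((B.orthogonal U).map S) ∧
      ∀ v₀ : V, ∃! g : V, g ∈ (B.orthogonal U).map S ∧ v₀ + g ∈ U :=
  have hcompl := isCompl_map_orthogonal hker hdisj
  ⟨hcompl, existsUnique_mem_add_mem_of_isCompl hcompl⟩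

end BilinForm

theorem sympOrth_eq_orthogonal_flip {V : Type} [AddCommGroup V] [Module ℝ V]
    (ω : LinearMap.BilinForm ℝ V) (U : Submodule ℝ V) :
    sympOrth ω U = ω.flip.orthogonal U :=
  rfl

/-- Regular non-holonomic Lagrangian systems (linear-algebraic content): if
`U^⊥ ∩ ker S = 0` and `S(U^⊥) ∩ U = 0` then `V = U ⊕ S(U^⊥)` and every `v₀`
admits a unique `g ∈ S(U^⊥)` with `v₀ + g ∈ U`. -/
theorem regular_nonholonomic_unique_solution
    {V : Type} [AddCommGroup V] [Module ℝ V] [FiniteDimensional ℝ V]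
    (ω : V →ₗ[ℝ] V →ₗ[ℝ] ℝ)
    (hω_nd : ∀ v : V, (∀ u : V, ω v u = 0) → v = 0)
    (hω_alt : ∀ v : V, ω v v = 0)
    (S : V →ₗ[ℝ] V)
    (hS : ∀ u v : V, ω (S u) v = - ω u (S v))
    (U : Submodule ℝ V)
    (h1 : sympOrth ω U ⊓ LinearMap.ker S = ⊥)
    (h2 : Submodule.map S (sympOrth ω U) ⊓ U = ⊥) :
    IsCompl U (Submodule.map S (sympOrth ω U)) ∧
    ∀ v₀ : V, ∃! g : V, g ∈ Submodule.map S (sympOrth ω U) ∧ v₀ + g ∈ U := by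
  rw [sympOrth_eq_orthogonal_flip] at h1 h2 ⊢
  exact regular_nonholonomic_unique_solution_general (disjoint_iff.2 h1) (disjoint_iff.2 h2).symm
end

section
/- Let M, m, R, r, I₁, I₂, g be real numbers with M ≥ 0, m ≥ 0, R ≥ 0, r ≥ 0, I₁ > 0, I₂ > 0, and let x, y, z, θ, φ, λ₁, λ₂, λ₃ : ℝ → ℝ with x, y, z, θ, φ twice differentiable. Suppose that for all t: (M+m)·x''(t) = λ₁(t), (M+m)·y''(t) = λ₂(t), m·z''(t) = λ₃(t) − m·g, I₁·φ''(t) = −λ₁(t)·R·cos(θ(t)) − λ₂(t)·R·sin(θ(t)) − λ₃(t)·r, I₂·θ''(t) = 0, together with the constraints x'(t) = R·cos(θ(t))·φ'(t), y'(t) = R·sin(θ(t))·φ'(t), z'(t) = r·φ'(t). Then for all t: φ''(t) = −m·g·r/(I₁ + (M+m)·R² + m·r²) and θ''(t) = 0. -/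
/-!
D'Alembert's principle. The constraints confine the velocity `(ẋ, ẏ, ż, φ̇)` to the line spanned by
`e = (R cos θ, R sin θ, r, 1)`, and the reaction forces do no work along `e`. Pairing the equations
of motion with `e` therefore eliminates the multipliers. Since the kinetic energy of `e`
does not depend on `θ`, the terms coming from the rotation of `e` cancel, and what remains is
(effective inertia) · `φ̈` = (power of gravity along `e`).
-/

open Real Topology

section Reduction

variable {ι : Type*} [Fintype ι] {m : ι → ℝ} {e : ι → ℝ → ℝ} {t : ℝ}

/-- The effective inertia of a system with diagonal mass matrix `m` constrained to move along
`e s` at time `s`: its kinetic energy at speed `v` is `reducedInertia m e s * v ^ 2 / 2`. -/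
def reducedInertia (m : ι → ℝ) (e : ι → ℝ → ℝ) (s : ℝ) : ℝ :=
  ∑ i, m i * e i s ^ 2

theorem deriv_reducedInertia (he : ∀ i, DifferentiableAt ℝ (e i) t) :
    deriv (reducedInertia m e) t = 2 * ∑ i, m i * deriv (e i) t * e i t := by
  have hsum : HasDerivAt (reducedInertia m e)
      (∑ i, m i * (2 * e i t ^ (2 - 1) * deriv (e i) t)) t :=
    HasDerivAt.fun_sum fun i _ ↦ ((he i).hasDerivAt.fun_pow 2).const_mul (m i)
  rw [hsum.deriv, Finset.mul_sum]
  exact Finset.sum_congr rfl fun i _ ↦ by ring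

theorem deriv_deriv_of_deriv_eventuallyEq_mul {q v e : ℝ → ℝ} (hv : DifferentiableAt ℝ v t)
    (he : DifferentiableAt ℝ e t) (hq : deriv q =ᶠ[𝓝 t] fun s ↦ v s * e s) :
    deriv (deriv q) t = deriv v t * e t + v t * deriv e t :=
  hq.deriv_eq.trans (deriv_fun_mul hv he)

theorem sum_mul_deriv_deriv_mul_eq_reducedInertia {q : ι → ℝ → ℝ} {v : ℝ → ℝ}
    (hv : DifferentiableAt ℝ v t) (he : ∀ i, DifferentiableAt ℝ (e i) t)
    (hq : ∀ i, deriv (q i) =ᶠ[𝓝 t] fun s ↦ v s * e i s) :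
    ∑ i, m i * deriv (deriv (q i)) t * e i t =
      reducedInertia m e t * deriv v t + deriv (reducedInertia m e) t / 2 * v t := by
  have hterm (i : ι) : m i * deriv (deriv (q i)) t * e i t =
      m i * e i t ^ 2 * deriv v t + m i * deriv (e i) t * e i t * v t := by
    rw [deriv_deriv_of_deriv_eventuallyEq_mul hv (he i) (hq i)]
    ring
  rw [deriv_reducedInertia he, mul_div_cancel_left₀ _ two_ne_zero, reducedInertia,
    Finset.sum_mul, Finset.sum_mul, ← Finset.sum_add_distrib]
  exact Finset.sum_congr rfl fun i _ ↦ hterm i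

theorem reducedInertia_mul_deriv_add_eq_sum_force_mul {q : ι → ℝ → ℝ} {v : ℝ → ℝ}
    {force reaction : ι → ℝ}
    (hv : DifferentiableAt ℝ v t) (he : ∀ i, DifferentiableAt ℝ (e i) t)
    (hq : ∀ i, deriv (q i) =ᶠ[𝓝 t] fun s ↦ v s * e i s)
    (hmotion : ∀ i, m i * deriv (deriv (q i)) t = force i + reaction i)
    (hideal : ∑ i, reaction i * e i t = 0) :
    reducedInertia m e t * deriv v t + deriv (reducedInertia m e) t / 2 * v t =
      ∑ i, force i * e i t := by
  rw [← sum_mul_deriv_deriv_mul_eq_reducedInertia hv he hq]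
  simp only [hmotion, add_mul, Finset.sum_add_distrib, hideal, add_zero]

end Reduction

namespace AppellMachine

/-- The diagonal mass matrix of Appell's machine in the coordinates `(x, y, z, φ)`. -/
def mass (M m I₁ : ℝ) : Fin 4 → ℝ :=
  ![M + m, M + m, m, I₁]

/-- The direction in `(x, y, z, φ)`-space to which the rolling and rope constraints confine the
velocity, normalized so that the speed along it is `φ̇`. -/
noncomputable def direction (R r : ℝ) (θ : ℝ → ℝ) : Fin 4 → ℝ → ℝ :=
  ![fun s ↦ R * cos (θ s), fun s ↦ R * sin (θ s), fun _ ↦ r, fun _ ↦ 1]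

/-- The Chetaev reaction force `∑ λⱼ ∂Ψⱼ/∂q̇` in the coordinates `q = (x, y, z, φ)` with heading
angle `α`. The third multiplier is taken with respect to `-Ψ₃ = ż - r φ̇`. -/
noncomputable def reaction (R r α l₁ l₂ l₃ : ℝ) : Fin 4 → ℝ :=
  ![l₁, l₂, l₃, -l₁ * R * cos α - l₂ * R * sin α - l₃ * r]

/-- The force of gravity in the coordinates `(x, y, z, φ)`. -/
def gravity (m g : ℝ) : Fin 4 → ℝ :=
  ![0, 0, -(m * g), 0]

variable {R r t : ℝ} {θ : ℝ → ℝ}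

theorem differentiableAt_direction (hθ : DifferentiableAt ℝ θ t) (i : Fin 4) :
    DifferentiableAt ℝ (direction R r θ i) t := by
  fin_cases i
  · exact hθ.cos.const_mul R
  · exact hθ.sin.const_mul R
  · exact differentiableAt_const r
  · exact differentiableAt_const 1

theorem reducedInertia_mass_direction (M m R r I₁ : ℝ) (θ : ℝ → ℝ) :
    reducedInertia (mass M m I₁) (direction R r θ) =
      fun _ ↦ I₁ + (M + m) * R ^ 2 + m * r ^ 2 := by
  funext s
  simp only [reducedInertia, mass, direction, Fin.sum_univ_four, Matrix.cons_val]
  linear_combination (M + m) * R ^ 2 * sin_sq_add_cos_sq (θ s)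

theorem sum_reaction_mul_direction (R r : ℝ) (θ : ℝ → ℝ) (l₁ l₂ l₃ t : ℝ) :
    ∑ i, reaction R r (θ t) l₁ l₂ l₃ i * direction R r θ i t = 0 := by
  simp only [reaction, direction, Fin.sum_univ_four, Matrix.cons_val]
  ring

theorem sum_gravity_mul_direction (m g R r : ℝ) (θ : ℝ → ℝ) (t : ℝ) :
    ∑ i, gravity m g i * direction R r θ i t = -(m * g * r) := by
  simp only [gravity, direction, Fin.sum_univ_four, Matrix.cons_val]
  ring

theorem inertia_mul_deriv_eq_neg_weight_mul {M m I₁ g l₁ l₂ l₃ : ℝ} {q : Fin 4 → ℝ → ℝ} {ω : ℝ → ℝ}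
    (hθ : DifferentiableAt ℝ θ t) (hω : DifferentiableAt ℝ ω t)
    (hq : ∀ i, deriv (q i) =ᶠ[𝓝 t] fun s ↦ ω s * direction R r θ i s)
    (hmotion : ∀ i, mass M m I₁ i * deriv (deriv (q i)) t =
      gravity m g i + reaction R r (θ t) l₁ l₂ l₃ i) :
    (I₁ + (M + m) * R ^ 2 + m * r ^ 2) * deriv ω t = -(m * g * r) := by
  have hreduced := reducedInertia_mul_deriv_add_eq_sum_force_mul hω
    (differentiableAt_direction hθ) hq hmotion (sum_reaction_mul_direction R r θ l₁ l₂ l₃ t)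
  simpa only [reducedInertia_mass_direction, sum_gravity_mul_direction, deriv_const, zero_div,
    zero_mul, add_zero] using hreduced

end AppellMachine

/-- Appell's machine (case `ρ = 0`): the constrained Euler–Lagrange equations with
Chetaev multipliers `λ₁, λ₂, λ₃` and the rolling/rope constraints imply the reduced
equations of motion `φ̈ = −mgr/(I₁ + (M+m)R² + mr²)` and `θ̈ = 0`. -/
theorem appell_machine_equations_of_motion
    (M m R r I₁ I₂ g : ℝ)
    (hM : 0 ≤ M) (hm : 0 ≤ m) (hR : 0 ≤ R) (hr : 0 ≤ r) (hI₁ : 0 < I₁) (hI₂ : 0 < I₂)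
    (x y z θ φ lam₁ lam₂ lam₃ : ℝ → ℝ)
    (hx : Differentiable ℝ x) (hx' : Differentiable ℝ (deriv x))
    (hy : Differentiable ℝ y) (hy' : Differentiable ℝ (deriv y))
    (hz : Differentiable ℝ z) (hz' : Differentiable ℝ (deriv z))
    (hθ : Differentiable ℝ θ) (hθ' : Differentiable ℝ (deriv θ))
    (hφ : Differentiable ℝ φ) (hφ' : Differentiable ℝ (deriv φ))
    (heqx : ∀ t, (M + m) * deriv (deriv x) t = lam₁ t)
    (heqy : ∀ t, (M + m) * deriv (deriv y) t = lam₂ t)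
    (heqz : ∀ t, m * deriv (deriv z) t = lam₃ t - m * g)
    (heqφ : ∀ t, I₁ * deriv (deriv φ) t =
      -(lam₁ t) * R * Real.cos (θ t) - lam₂ t * R * Real.sin (θ t) - lam₃ t * r)
    (heqθ : ∀ t, I₂ * deriv (deriv θ) t = 0)
    (hc1 : ∀ t, deriv x t = R * Real.cos (θ t) * deriv φ t)
    (hc2 : ∀ t, deriv y t = R * Real.sin (θ t) * deriv φ t)
    (hc3 : ∀ t, deriv z t = r * deriv φ t) :
    ∀ t, deriv (deriv φ) t = -(m * g * r) / (I₁ + (M + m) * R ^ 2 + m * r ^ 2) ∧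
      deriv (deriv θ) t = 0 := by
  intro t
  have hconstraint (i : Fin 4) :
      deriv (![x, y, z, φ] i) =ᶠ[𝓝 t] fun s ↦ deriv φ s * AppellMachine.direction R r θ i s := by
    refine .of_forall fun s ↦ ?_
    fin_cases i
    · exact (hc1 s).trans (mul_comm _ _)
    · exact (hc2 s).trans (mul_comm _ _)
    · exact (hc3 s).trans (mul_comm _ _)
    · exact (mul_one _).symm
  have hmotion (i : Fin 4) : AppellMachine.mass M m I₁ i * deriv (deriv (![x, y, z, φ] i)) t =
      AppellMachine.gravity m g i +
        AppellMachine.reaction R r (θ t) (lam₁ t) (lam₂ t) (lam₃ t) i := by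
    fin_cases i
    · exact (heqx t).trans (zero_add _).symm
    · exact (heqy t).trans (zero_add _).symm
    · exact (heqz t).trans (sub_eq_neg_add _ _)
    · exact (heqφ t).trans (zero_add _).symm
  have hinertia : 0 < I₁ + (M + m) * R ^ 2 + m * r ^ 2 := by positivity
  have hφ'' := AppellMachine.inertia_mul_deriv_eq_neg_weight_mul (hθ t) (hφ' t) hconstraint hmotion
  exact ⟨eq_div_of_mul_eq hinertia.ne' ((mul_comm _ _).trans hφ''),
    (mul_eq_zero.mp (heqθ t)).resolve_left hI₂.ne'⟩
end

section
/- Let m₁, m₂ be positive real numbers and let x₁, y₁, x₂, y₂, λ : ℝ → ℝ with x₁, y₁, x₂, y₂ twice differentiable. Suppose that for all t: m₁·x₁''(t) = λ(t)·y₂'(t), m₁·y₁''(t) = −λ(t)·x₂'(t), m₂·x₂''(t) = −λ(t)·y₁'(t), m₂·y₂''(t) = λ(t)·x₁'(t), that the constraint x₁'(t)·y₂'(t) − x₂'(t)·y₁'(t) = 0 holds for all t, and that for every t at least one of the velocity vectors (x₁'(t), y₁'(t)) and (x₂'(t), y₂'(t)) is nonzero. Then λ(t) = 0 for all t, and consequently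 x₁''(t) = y₁''(t) = x₂''(t) = y₂''(t) = 0 for all t, i.e. the motion is free. -/
/-!
When a constraint `Ψ` depends on the velocity alone, `dΨ` kills the acceleration `a`, because
`dΨ a = d/dt (Ψ ∘ v) = 0`. Pairing the equation of motion `M(a, ·) = lam • dΨ` with `a` itself
therefore gives `M(a, a) = 0`, so `a = 0` as soon as the mass form `M` is definite, and then
`lam • dΨ = 0` forces `lam = 0` wherever `dΨ ≠ 0`. For Benenti's constraint `dΨ` vanishes only when
both velocities do.
-/

open Topology

theorem fderiv_apply_deriv_eq_zero_of_eventually_eq_const {𝕜 E F : Type*}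
    [NontriviallyNormedField 𝕜] [NormedAddCommGroup E] [NormedSpace 𝕜 E]
    [NormedAddCommGroup F] [NormedSpace 𝕜 F]
    {Ψ : E → F} {Ψ' : E →L[𝕜] F} {v : 𝕜 → E} {a : E} {c : F} {t : 𝕜}
    (hΨ : HasFDerivAt Ψ Ψ' (v t)) (hv : HasDerivAt v a t) (hc : ∀ᶠ s in 𝓝 t, Ψ (v s) = c) :
    Ψ' a = 0 :=
  (hΨ.comp_hasDerivAt t hv).unique ((hasDerivAt_const t c).congr_of_eventuallyEq hc)

section Chetaev

variable {R V : Type*} [CommRing R] [AddCommGroup V] [Module R V]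
  {M : LinearMap.BilinForm R V} {dΨ : Module.Dual R V} {a : V} {lam : R}

theorem acceleration_eq_zero_of_chetaev (hM : M.toQuadraticMap.Anisotropic)
    (hmotion : M a = lam • dΨ) (htangent : dΨ a = 0) : a = 0 := by
  refine hM a ?_
  calc
    M a a = lam * dΨ a := by rw [hmotion, LinearMap.smul_apply, smul_eq_mul]
    _ = 0 := by rw [htangent, mul_zero]

theorem multiplier_eq_zero_of_chetaev [IsDomain R] (hM : M.toQuadraticMap.Anisotropic)
    (hmotion : M a = lam • dΨ) (htangent : dΨ a = 0) (hdΨ : dΨ ≠ 0) : lam = 0 := by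
  have hforce : lam • dΨ = 0 := by
    rw [← hmotion, acceleration_eq_zero_of_chetaev hM hmotion htangent, map_zero]
  exact (smul_eq_zero.mp hforce).resolve_right hdΨ

end Chetaev

namespace Benenti

/-- The mass form `M`: the symmetric bilinear form with `M(w, w)` twice the kinetic energy of two
planar point masses `m₁` and `m₂` with velocities `w.1` and `w.2`. -/
def massForm (m₁ m₂ : ℝ) : LinearMap.BilinForm ℝ ((ℝ × ℝ) × (ℝ × ℝ)) :=
  LinearMap.mk₂ ℝ
    (fun w z => m₁ * (w.1.1 * z.1.1 + w.1.2 * z.1.2) + m₂ * (w.2.1 * z.2.1 + w.2.2 * z.2.2))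
    (fun _ _ _ => by simp only [Prod.fst_add, Prod.snd_add]; ring)
    (fun _ _ _ => by simp only [Prod.smul_fst, Prod.smul_snd, smul_eq_mul]; ring)
    (fun _ _ _ => by simp only [Prod.fst_add, Prod.snd_add]; ring)
    (fun _ _ _ => by simp only [Prod.smul_fst, Prod.smul_snd, smul_eq_mul]; ring)

theorem massForm_apply (m₁ m₂ : ℝ) (w z : (ℝ × ℝ) × (ℝ × ℝ)) :
    massForm m₁ m₂ w z =
      m₁ * (w.1.1 * z.1.1 + w.1.2 * z.1.2) + m₂ * (w.2.1 * z.2.1 + w.2.2 * z.2.2) :=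
  rfl

theorem massForm_anisotropic {m₁ m₂ : ℝ} (hm₁ : 0 < m₁) (hm₂ : 0 < m₂) :
    (massForm m₁ m₂).toQuadraticMap.Anisotropic := by
  rintro ⟨⟨a₁, b₁⟩, a₂, b₂⟩ h
  have hsum : m₁ * (a₁ * a₁ + b₁ * b₁) + m₂ * (a₂ * a₂ + b₂ * b₂) = 0 := h
  rw [add_eq_zero_iff_of_nonneg
    (mul_nonneg hm₁.le (add_nonneg (mul_self_nonneg a₁) (mul_self_nonneg b₁)))
    (mul_nonneg hm₂.le (add_nonneg (mul_self_nonneg a₂) (mul_self_nonneg b₂)))] at hsum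
  simpa [hm₁.ne', hm₂.ne', mul_self_add_mul_self_eq_zero] using hsum

/-- Benenti's constraint function `Ψ = ẋ₁ẏ₂ - ẋ₂ẏ₁`, which vanishes exactly when the two velocities
`w.1 = (ẋ₁, ẏ₁)` and `w.2 = (ẋ₂, ẏ₂)` are parallel. -/
def constraint (w : (ℝ × ℝ) × (ℝ × ℝ)) : ℝ :=
  w.1.1 * w.2.2 - w.2.1 * w.1.2

theorem differentiable_constraint : Differentiable ℝ constraint := by
  unfold constraint
  fun_prop

theorem fderiv_constraint_apply (w z : (ℝ × ℝ) × (ℝ × ℝ)) :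
    fderiv ℝ constraint w z =
      w.2.2 * z.1.1 - w.2.1 * z.1.2 - w.1.2 * z.2.1 + w.1.1 * z.2.2 := by
  have hfst : HasFDerivAt Prod.fst _ w := hasFDerivAt_fst (𝕜 := ℝ)
  have hsnd : HasFDerivAt Prod.snd _ w := hasFDerivAt_snd (𝕜 := ℝ)
  have hconstraint : HasFDerivAt constraint _ w :=
    (hfst.fst.mul hsnd.snd).sub (hsnd.fst.mul hfst.snd)
  rw [hconstraint.fderiv]
  simp only [sub_apply, add_apply, smul_apply, ContinuousLinearMap.comp_apply,
    ContinuousLinearMap.coe_fst', ContinuousLinearMap.coe_snd', smul_eq_mul]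
  ring

theorem fderiv_constraint_ne_zero {w : (ℝ × ℝ) × (ℝ × ℝ)} (hw : w ≠ 0) :
    fderiv ℝ constraint w ≠ 0 := by
  contrapose! hw
  have hcoord (z : (ℝ × ℝ) × (ℝ × ℝ)) :
      w.2.2 * z.1.1 - w.2.1 * z.1.2 - w.1.2 * z.2.1 + w.1.1 * z.2.2 = 0 := by
    rw [← fderiv_constraint_apply, hw, zero_apply]
  ext
  · simpa using hcoord ((0, 0), (0, 1))
  · simpa using hcoord ((0, 0), (1, 0))
  · simpa using hcoord ((0, 1), (0, 0))
  · simpa using hcoord ((1, 0), (0, 0))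

end Benenti

open Benenti in
theorem benenti_multiplier_vanishes_general
    {m₁ m₂ : ℝ} (hm₁ : 0 < m₁) (hm₂ : 0 < m₂)
    {u₁ v₁ u₂ v₂ : ℝ → ℝ} {a₁ b₁ a₂ b₂ lam t : ℝ}
    (hu₁ : HasDerivAt u₁ a₁ t) (hv₁ : HasDerivAt v₁ b₁ t)
    (hu₂ : HasDerivAt u₂ a₂ t) (hv₂ : HasDerivAt v₂ b₂ t)
    (heq1 : m₁ * a₁ = lam * v₂ t) (heq2 : m₁ * b₁ = -lam * u₂ t)
    (heq3 : m₂ * a₂ = -lam * v₁ t) (heq4 : m₂ * b₂ = lam * u₁ t)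
    (hcon : ∀ᶠ s in 𝓝 t, u₁ s * v₂ s - u₂ s * v₁ s = 0) :
    ((u₁ t, v₁ t) ≠ (0, 0) ∨ (u₂ t, v₂ t) ≠ (0, 0) → lam = 0) ∧
      a₁ = 0 ∧ b₁ = 0 ∧ a₂ = 0 ∧ b₂ = 0 := by
  let w : ℝ → (ℝ × ℝ) × (ℝ × ℝ) := fun s => ((u₁ s, v₁ s), (u₂ s, v₂ s))
  have hw : HasDerivAt w ((a₁, b₁), (a₂, b₂)) t := (hu₁.prodMk hv₁).prodMk (hu₂.prodMk hv₂)
  have hM := massForm_anisotropic hm₁ hm₂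
  have htangent : fderiv ℝ constraint (w t) ((a₁, b₁), (a₂, b₂)) = 0 :=
    fderiv_apply_deriv_eq_zero_of_eventually_eq_const
      (differentiable_constraint (w t)).hasFDerivAt hw hcon
  have hmotion : massForm m₁ m₂ ((a₁, b₁), (a₂, b₂)) =
      lam • (fderiv ℝ constraint (w t) : (ℝ × ℝ) × (ℝ × ℝ) →ₗ[ℝ] ℝ) := by
    refine LinearMap.ext fun z => ?_
    rw [massForm_apply, LinearMap.smul_apply, ContinuousLinearMap.coe_coe, fderiv_constraint_apply,
      smul_eq_mul]
    linear_combination z.1.1 * heq1 + z.1.2 * heq2 + z.2.1 * heq3 + z.2.2 * heq4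
  refine ⟨fun hvel => multiplier_eq_zero_of_chetaev hM hmotion htangent
    (mod_cast fderiv_constraint_ne_zero ?_), ?_⟩
  · simpa [w, or_iff_not_imp_left] using hvel
  · simpa [and_assoc] using acceleration_eq_zero_of_chetaev hM hmotion htangent

/-- Benenti's system with Chetaev forces: if at every time at least one of the two
velocity vectors is nonzero, the multiplier vanishes and the motion is free. -/
theorem benenti_multiplier_vanishes
    (m₁ m₂ : ℝ) (hm₁ : 0 < m₁) (hm₂ : 0 < m₂)
    (x₁ y₁ x₂ y₂ lam : ℝ → ℝ)
    (hx₁ : Differentiable ℝ x₁) (hx₁' : Differentiable ℝ (deriv x₁))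
    (hy₁ : Differentiable ℝ y₁) (hy₁' : Differentiable ℝ (deriv y₁))
    (hx₂ : Differentiable ℝ x₂) (hx₂' : Differentiable ℝ (deriv x₂))
    (hy₂ : Differentiable ℝ y₂) (hy₂' : Differentiable ℝ (deriv y₂))
    (heq1 : ∀ t, m₁ * deriv (deriv x₁) t = lam t * deriv y₂ t)
    (heq2 : ∀ t, m₁ * deriv (deriv y₁) t = -(lam t) * deriv x₂ t)
    (heq3 : ∀ t, m₂ * deriv (deriv x₂) t = -(lam t) * deriv y₁ t)
    (heq4 : ∀ t, m₂ * deriv (deriv y₂) t = lam t * deriv x₁ t)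
    (hcon : ∀ t, deriv x₁ t * deriv y₂ t - deriv x₂ t * deriv y₁ t = 0)
    (hvel : ∀ t, (deriv x₁ t, deriv y₁ t) ≠ (0, 0) ∨ (deriv x₂ t, deriv y₂ t) ≠ (0, 0)) :
    ∀ t, lam t = 0 ∧ deriv (deriv x₁) t = 0 ∧ deriv (deriv y₁) t = 0 ∧
      deriv (deriv x₂) t = 0 ∧ deriv (deriv y₂) t = 0 := by
  intro t
  exact (benenti_multiplier_vanishes_general hm₁ hm₂ (hx₁' t).hasDerivAt (hy₁' t).hasDerivAt
    (hx₂' t).hasDerivAt (hy₂' t).hasDerivAt (heq1 t) (heq2 t) (heq3 t) (heq4 t)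
    (.of_forall hcon)).imp_left fun h => h (hvel t)
end
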